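/- The ℝ-linear (ℂ-antilinear) map S : ℂ² → ℂ² defined by S(z₁, z₂) = ((ζ−1)·conj(z₂), (ζ−1)·conj(z₁)) is an involution (S ∘ S = id) and maps the lattice Λ_A bijectively onto itself. Hence S induces an anti-holomorphic involution σ of the abelian surface A = ℂ²/Λ_A. -/

import Mathlib

noncomputable section

/-- ζ = (1 + √3·i)/2, a primitive sixth root of unity. -/
def ζ : ℂ := (1 + (Real.sqrt 3 : ℂ) * Complex.I) / 2

/-- The ℂ-antilinear map S(z₁,z₂) = ((ζ−1)·conj z₂, (ζ−1)·conj z₁). -/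
def Smap (v : ℂ × ℂ) : ℂ × ℂ :=
  ((ζ - 1) * (starRingEnd ℂ) v.2, (ζ - 1) * (starRingEnd ℂ) v.1)

/-- The lattice Λ_A = ℤ𝐞₁ ⊕ ℤ𝐞₂ ⊕ ℤ𝐞₃ ⊕ ℤ𝐞₄ ⊂ ℂ², with
𝐞₁ = (1,0), 𝐞₂ = (ζ,1), 𝐞₃ = (0,1+ζ), 𝐞₄ = (0,2). -/
def ΛA : Set (ℂ × ℂ) :=
  {v | ∃ a b c d : ℤ, v = (a : ℂ) • ((1 : ℂ), (0 : ℂ)) + (b : ℂ) • (ζ, (1 : ℂ))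
    + (c : ℂ) • ((0 : ℂ), 1 + ζ) + (d : ℂ) • ((0 : ℂ), (2 : ℂ))}

/-! The map `S` is an involution because `ζ - 1 = ζ ^ 2` lies on the unit circle. It is additive, so
to see that it maps `Λ_A` into itself it suffices to check the four generators; being an involution,
it then maps `Λ_A` bijectively onto itself. -/

open Function

theorem bijOn_addSubgroupClosure_of_involutive {G F : Type*} [AddGroup G] [FunLike F G G]
    [AddMonoidHomClass F G G] {f : F} (hf : Involutive f) {s : Set G}
    (hs : Set.MapsTo f s (AddSubgroup.closure s)) :
    Set.BijOn f (AddSubgroup.closure s) (AddSubgroup.closure s) := by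
  have hmaps : Set.MapsTo f (AddSubgroup.closure s) (AddSubgroup.closure s) :=
    (AddSubgroup.closure_le ((AddSubgroup.closure s).comap (f : G →+ G))).2 hs
  exact Set.InvOn.bijOn ⟨hf.leftInverse.leftInvOn _, hf.leftInverse.leftInvOn _⟩ hmaps hmaps

section ConjSwap

variable {R : Type*} [CommSemiring R] [StarRing R]

/-- The antilinear map `(x, y) ↦ (c ȳ, c x̄)` over a commutative star ring `R`, of which the
paper's `S` is the case `R = ℂ`, `c = ζ - 1`. It is bundled so that additivity is available. -/
def conjSwap (c : R) : R × R →ₛₗ[starRingEnd R] R × R where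
  toFun v := (c * starRingEnd R v.2, c * starRingEnd R v.1)
  map_add' v w := by ext <;> simp [mul_add]
  map_smul' r v := by ext <;> simp [mul_left_comm]

theorem conjSwap_involutive {c : R} (hc : c * starRingEnd R c = 1) :
    Involutive (conjSwap c) := by
  intro v
  ext <;> simp [conjSwap, ← mul_assoc, hc]

end ConjSwap

theorem zeta_sq : ζ ^ 2 = ζ - 1 := by
  have sqrt_three_sq : (Real.sqrt 3 : ℂ) ^ 2 = 3 := by
    exact_mod_cast Real.sq_sqrt (show (0 : ℝ) ≤ 3 by norm_num)
  unfold ζ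
  linear_combination (1 / 4 : ℂ) * Complex.I ^ 2 * sqrt_three_sq + (3 / 4 : ℂ) * Complex.I_sq

theorem conj_zeta : starRingEnd ℂ ζ = 1 - ζ := by
  simp only [ζ, map_div₀, map_add, map_mul, map_one, map_ofNat, Complex.conj_ofReal,
    Complex.conj_I]
  ring

theorem zeta_sub_one_mul_conj : (ζ - 1) * starRingEnd ℂ (ζ - 1) = 1 := by
  rw [map_sub, map_one, conj_zeta]
  linear_combination -zeta_sq

theorem Smap_involutive : Involutive Smap :=
  conjSwap_involutive zeta_sub_one_mul_conj

/-- The generators `𝐞₁, 𝐞₂, 𝐞₃, 𝐞₄` of the period lattice `Λ_A`, as a family indexed from `0`. -/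
def periodGen : Fin 4 → ℂ × ℂ :=
  ![(1, 0), (ζ, 1), (0, 1 + ζ), (0, 2)]

/-- The integer matrix of `S` on `Λ_A`, in the row convention: row `i` holds the coordinates of the
image of `periodGen i`. -/
def periodMatrix : Matrix (Fin 4) (Fin 4) ℤ :=
  !![ 0, 0, 1, -1;
     -1, 1, 1, -1;
     -1, 2, 0, -1;
     -2, 2, 0, -1]

theorem sum_zsmul_periodGen (n : Fin 4 → ℤ) :
    ∑ j, n j • periodGen j = (n 0 + n 1 * ζ, n 1 + n 2 * (1 + ζ) + n 3 * 2) := by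
  ext <;> simp [Fin.sum_univ_four, periodGen]

theorem ΛA_eq_closure : ΛA = AddSubgroup.closure (Set.range periodGen) := by
  ext v
  rw [SetLike.mem_coe, AddSubgroup.mem_closure_range_iff_of_fintype]
  constructor
  · rintro ⟨a, b, c, d, rfl⟩
    exact ⟨![a, b, c, d], by simp [sum_zsmul_periodGen, -zsmul_eq_mul]⟩
  · rintro ⟨n, rfl⟩
    exact ⟨n 0, n 1, n 2, n 3, by simp [sum_zsmul_periodGen, -zsmul_eq_mul]⟩

theorem Smap_periodGen (i : Fin 4) :
    Smap (periodGen i) = ∑ j, periodMatrix i j • periodGen j := by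
  have conj_two : starRingEnd ℂ 2 = 2 := map_ofNat _ 2
  rw [sum_zsmul_periodGen]
  ext <;> fin_cases i <;>
    simp only [Smap, periodGen, periodMatrix, Matrix.of_apply, Matrix.cons_val, Fin.reduceFinMk,
      Fin.zero_eta, Fin.mk_one, map_add, map_zero, map_one, conj_zeta, conj_two] <;>
    push_cast
  · ring
  · ring
  · linear_combination -zeta_sq
  · ring
  · ring
  · linear_combination -zeta_sq
  · ring
  · ring

theorem Smap_periodGen_mem_closure (i : Fin 4) :
    Smap (periodGen i) ∈ AddSubgroup.closure (Set.range periodGen) := by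
  rw [Smap_periodGen]
  exact sum_mem fun j _ => zsmul_mem (AddSubgroup.subset_closure (Set.mem_range_self j)) _

/-- S is an involution and maps Λ_A bijectively onto itself; hence it induces an
anti-holomorphic involution σ of A = ℂ²/Λ_A. -/
theorem stmt12 : (∀ v : ℂ × ℂ, Smap (Smap v) = v) ∧ Set.BijOn Smap ΛA ΛA := by
  refine ⟨Smap_involutive, ?_⟩
  rw [ΛA_eq_closure]
  exact bijOn_addSubgroupClosure_of_involutive (f := conjSwap (ζ - 1)) Smap_involutive
    (Set.mapsTo_range_iff.2 Smap_periodGen_mem_closure)
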